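/- Let α and β be random variables on a finite probability space that are conditionally independent of order k, and let (u, v, w) be a triple in the rate region of (α, β). Then H(α) + H(β) ≤ v + w + (2 − 2^{−k})·u. -/

import Mathlib

open scoped BigOperators Classical

noncomputable section

/-- Probability of an event `E` under a distribution `μ` on a finite sample space `Ω`. -/
def pr {Ω : Type} [Fintype Ω] (μ : Ω → ℝ) (E : Ω → Prop) : ℝ :=
  ∑ ω, if E ω then μ ω else 0

/-- `μ` is a probability distribution on the finite space `Ω`. -/
def IsProb {Ω : Type} [Fintype Ω] (μ : Ω → ℝ) : Prop :=
  (∀ ω, 0 ≤ μ ω) ∧ ∑ ω, μ ω = 1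

/-- Shannon entropy (base 2) of a random variable `α` on a finite probability space. -/
def ent {Ω A : Type} [Fintype Ω] (μ : Ω → ℝ) (α : Ω → A) : ℝ :=
  -∑ a ∈ Finset.univ.image α,
      pr μ (fun ω => α ω = a) * Real.logb 2 (pr μ (fun ω => α ω = a))

/-- Conditional entropy `H(α | β)`. -/
def condEnt {Ω A B : Type} [Fintype Ω] (μ : Ω → ℝ) (α : Ω → A) (β : Ω → B) : ℝ :=
  ent μ (fun ω => (α ω, β ω)) - ent μ β

/-- Mutual information `I(α : β)`. -/
def mutualInfo {Ω A B : Type} [Fintype Ω] (μ : Ω → ℝ) (α : Ω → A) (β : Ω → B) : ℝ :=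
  ent μ α + ent μ β - ent μ (fun ω => (α ω, β ω))

/-- Conditional mutual information `I(α : β | γ)`. -/
def condMutualInfo {Ω A B C : Type} [Fintype Ω] (μ : Ω → ℝ)
    (α : Ω → A) (β : Ω → B) (γ : Ω → C) : ℝ :=
  condEnt μ α γ + condEnt μ β γ - condEnt μ (fun ω => (α ω, β ω)) γ

/-- Independence of two random variables. -/
def Indep {Ω A B : Type} [Fintype Ω] (μ : Ω → ℝ) (α : Ω → A) (β : Ω → B) : Prop :=
  ∀ (a : A) (b : B),
    pr μ (fun ω => α ω = a ∧ β ω = b) =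
      pr μ (fun ω => α ω = a) * pr μ (fun ω => β ω = b)

/-- Auxiliary form of "conditionally independent of order `k`" (explicit `Fintype`):
`α` and `β` are conditionally independent of order `0` if they are independent,
and of order `k + 1` if on some finite probability space there are random variables
`α₀, β₀, α*, β*` such that `(α₀, β₀)` has the same joint distribution as `(α, β)`,
`I(α₀ : β₀ | α*) = 0`, `I(α₀ : β₀ | β*) = 0`, and `α*, β*` are conditionally
independent of order `k`. -/
def CondIndepOrderAux : ℕ → (Ω A B : Type) → Fintype Ω → (Ω → ℝ) → (Ω → A) → (Ω → B) → Prop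
  | 0, _Ω, _A, _B, iΩ, μ, α, β => @Indep _ _ _ iΩ μ α β
  | k+1, _Ω, A, B, iΩ, μ, α, β =>
      ∃ (Ω' A' B' : Type) (iΩ' : Fintype Ω') (μ' : Ω' → ℝ)
        (α₀ : Ω' → A) (β₀ : Ω' → B) (αs : Ω' → A') (βs : Ω' → B'),
        @IsProb _ iΩ' μ' ∧
        (∀ (a : A) (b : B),
          @pr _ iΩ' μ' (fun ω => α₀ ω = a ∧ β₀ ω = b) =
            @pr _ iΩ μ (fun ω => α ω = a ∧ β ω = b)) ∧
        @condMutualInfo _ _ _ _ iΩ' μ' α₀ β₀ αs = 0 ∧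
        @condMutualInfo _ _ _ _ iΩ' μ' α₀ β₀ βs = 0 ∧
        CondIndepOrderAux k Ω' A' B' iΩ' μ' αs βs

/-- Random variables `α` and `β` on a finite probability space are
conditionally independent of order `k`. -/
def CondIndepOrder {Ω A B : Type} [iΩ : Fintype Ω]
    (μ : Ω → ℝ) (α : Ω → A) (β : Ω → B) (k : ℕ) : Prop :=
  CondIndepOrderAux k Ω A B iΩ μ α β

/-- An `m × n` joint probability matrix: nonnegative entries summing to `1`. -/
def IsJointProbMatrix {m n : ℕ} (M : Matrix (Fin m) (Fin n) ℝ) : Prop :=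
  (∀ i j, 0 ≤ M i j) ∧ ∑ i, ∑ j, M i j = 1

/-- `M` is the joint probability matrix of the pair `(α, β)`. -/
def IsJointMatrixOf {Ω : Type} [Fintype Ω] {m n : ℕ} (M : Matrix (Fin m) (Fin n) ℝ)
    (μ : Ω → ℝ) (α : Ω → Fin m) (β : Ω → Fin n) : Prop :=
  ∀ i j, M i j = pr μ (fun ω => α ω = i ∧ β ω = j)

/-- `M` is a block matrix: rows and columns can be partitioned into two nonempty
parts so that the two diagonal blocks each contain a nonzero element and all
entries outside the diagonal blocks vanish. -/
def IsBlockMatrix {m n : ℕ} (M : Matrix (Fin m) (Fin n) ℝ) : Prop :=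
  ∃ (I₁ : Finset (Fin m)) (J₁ : Finset (Fin n)),
    I₁.Nonempty ∧ I₁ᶜ.Nonempty ∧ J₁.Nonempty ∧ J₁ᶜ.Nonempty ∧
    (∃ i ∈ I₁, ∃ j ∈ J₁, M i j ≠ 0) ∧
    (∃ i ∈ I₁ᶜ, ∃ j ∈ J₁ᶜ, M i j ≠ 0) ∧
    (∀ i j, ((i ∈ I₁ ∧ j ∈ J₁ᶜ) ∨ (i ∈ I₁ᶜ ∧ j ∈ J₁)) → M i j = 0)

/-- `M` is a good matrix: the joint probability matrix of some pair of
conditionally independent random variables (of some finite order). -/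
def IsGoodMatrix {m n : ℕ} (M : Matrix (Fin m) (Fin n) ℝ) : Prop :=
  ∃ (Ω : Type) (iΩ : Fintype Ω) (μ : Ω → ℝ) (α : Ω → Fin m) (β : Ω → Fin n) (k : ℕ),
    @IsProb _ iΩ μ ∧ @IsJointMatrixOf _ iΩ _ _ M μ α β ∧
    @CondIndepOrder _ _ _ iΩ μ α β k

/-- A stochastic matrix: nonnegative entries, all row sums equal to `1`. -/
def IsStochastic {m n : ℕ} (A : Matrix (Fin m) (Fin n) ℝ) : Prop :=
  (∀ i j, 0 ≤ A i j) ∧ ∀ i, ∑ j, A i j = 1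

/-- The matrix `D_ε`: diagonal entries `1/2 - ε`, off-diagonal entries `ε`. -/
def Dmat (ε : ℝ) : Matrix (Fin 2) (Fin 2) ℝ :=
  fun i j => if i = j then 1/2 - ε else ε

/-- The distribution of `n` i.i.d. trials, each distributed according to `μ`. -/
def iidMeasure {Ω : Type} [Fintype Ω] (μ : Ω → ℝ) (n : ℕ) : (Fin n → Ω) → ℝ :=
  fun ωv => ∏ i, μ (ωv i)

/-- The sequence of `n` coordinatewise copies of a random variable. -/
def iidRV {Ω A : Type} (α : Ω → A) (n : ℕ) : (Fin n → Ω) → (Fin n → A) :=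
  fun ωv i => α (ωv i)

/-- `(u, v, w)` belongs to the rate region of the pair `(α, β)`. -/
def InRateRegion {Ω A B : Type} [Fintype Ω] (μ : Ω → ℝ) (α : Ω → A) (β : Ω → B)
    (u v w : ℝ) : Prop :=
  0 ≤ u ∧ 0 ≤ v ∧ 0 ≤ w ∧
  ∀ ε > (0:ℝ), ∀ δ > (0:ℝ), ∃ n₀ : ℕ, ∀ n ≥ n₀,
    ∃ (t : (Fin n → A) × (Fin n → B) → (Fin ⌊(u + δ) * n⌋₊ → Bool))
      (f : (Fin n → A) × (Fin n → B) → (Fin ⌊(v + δ) * n⌋₊ → Bool))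
      (g : (Fin n → A) × (Fin n → B) → (Fin ⌊(w + δ) * n⌋₊ → Bool))
      (r : (Fin ⌊(u + δ) * n⌋₊ → Bool) × (Fin ⌊(v + δ) * n⌋₊ → Bool) → (Fin n → A))
      (s : (Fin ⌊(u + δ) * n⌋₊ → Bool) × (Fin ⌊(w + δ) * n⌋₊ → Bool) → (Fin n → B)),
      pr (iidMeasure μ n) (fun ωv =>
          r (t (iidRV α n ωv, iidRV β n ωv), f (iidRV α n ωv, iidRV β n ωv)) = iidRV α n ωv)
        > 1 - ε ∧
      pr (iidMeasure μ n) (fun ωv =>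
          s (t (iidRV α n ωv, iidRV β n ωv), g (iidRV α n ωv, iidRV β n ωv)) = iidRV β n ωv)
        > 1 - ε

/-- The support of a matrix: the set of positions of its nonzero entries. -/
def msupport {m n : ℕ} (M : Matrix (Fin m) (Fin n) ℝ) : Set (Fin m × Fin n) :=
  {p | M p.1 p.2 ≠ 0}

/-- An r-matrix: nonnegative entries and rectangular support. -/
def IsRMatrix {m n : ℕ} (M : Matrix (Fin m) (Fin n) ℝ) : Prop :=
  (∀ i j, 0 ≤ M i j) ∧ ∃ (A : Set (Fin m)) (B : Set (Fin n)), msupport M = A ×ˢ B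

/-- An r-decomposition of `M`: an expression of `M` as a finite sum of r-matrices
such that the supports of consecutive summands intersect. -/
def IsRDecomposition {m n : ℕ} (M : Matrix (Fin m) (Fin n) ℝ)
    (l : ℕ) (Ms : Fin l → Matrix (Fin m) (Fin n) ℝ) : Prop :=
  M = ∑ i, Ms i ∧ (∀ i, IsRMatrix (Ms i)) ∧
  ∀ (i : ℕ) (h : i + 1 < l),
    (msupport (Ms ⟨i, Nat.lt_of_succ_lt h⟩) ∩ msupport (Ms ⟨i + 1, h⟩)).Nonempty

end

lemma sum_fiber {Ω D : Type} [Fintype Ω] (μ : Ω → ℝ) (Z : Ω → D) (S : Finset D)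
    (hS : ∀ ω, Z ω ∈ S) (F : D → ℝ) :
    ∑ ω, μ ω * F (Z ω) = ∑ d ∈ S, pr μ (fun ω => Z ω = d) * F d := by
  unfold pr
  simp_rw [Finset.sum_mul]
  rw [Finset.sum_comm]
  refine Finset.sum_congr rfl fun ω _ => ?_
  rw [Finset.sum_eq_single (Z ω)]
  · simp
  · intro b _ hb
    rw [if_neg (fun h => hb h.symm), zero_mul]
  · intro h
    exact absurd (hS ω) h

lemma ent_eq {Ω A : Type} [Fintype Ω] (μ : Ω → ℝ) (X : Ω → A) :
    ent μ X = -∑ ω, μ ω * Real.logb 2 (pr μ (fun ω' => X ω' = X ω)) := by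
  unfold ent
  rw [sum_fiber μ X (Finset.univ.image X) (by simp)
    (fun a => Real.logb 2 (pr μ (fun ω' => X ω' = a)))]

lemma pr_nonneg {Ω : Type} [Fintype Ω] {μ : Ω → ℝ} (hμ : ∀ ω, 0 ≤ μ ω) (E : Ω → Prop) :
    0 ≤ pr μ E := by
  unfold pr
  refine Finset.sum_nonneg fun ω _ => ?_
  split_ifs
  · exact hμ ω
  · exact le_rfl

lemma pr_mono {Ω : Type} [Fintype Ω] {μ : Ω → ℝ} (hμ : ∀ ω, 0 ≤ μ ω) (E F : Ω → Prop)
    (h : ∀ ω, E ω → F ω) : pr μ E ≤ pr μ F := by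
  unfold pr
  refine Finset.sum_le_sum fun ω _ => ?_
  by_cases hE : E ω
  · simp [hE, h ω hE]
  · simp only [hE, if_false]
    split_ifs
    · exact hμ ω
    · exact le_rfl

lemma pr_congr {Ω : Type} [Fintype Ω] {μ : Ω → ℝ} (E F : Ω → Prop)
    (h : ∀ ω, μ ω ≠ 0 → (E ω ↔ F ω)) : pr μ E = pr μ F := by
  unfold pr
  refine Finset.sum_congr rfl fun ω _ => ?_
  by_cases h0 : μ ω = 0
  · simp [h0]
  · simp [h ω h0]

lemma le_pr {Ω : Type} [Fintype Ω] {μ : Ω → ℝ} (hμ : ∀ ω, 0 ≤ μ ω) (E : Ω → Prop)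
    (ω : Ω) (h : E ω) : μ ω ≤ pr μ E := by
  unfold pr
  have := Finset.single_le_sum (f := fun ω => if E ω then μ ω else 0) (s := Finset.univ)
    (fun ω _ => by
      show 0 ≤ if E ω then μ ω else 0
      split_ifs
      · exact hμ ω
      · exact le_rfl) (Finset.mem_univ ω)
  simpa [h] using this

lemma pr_self_pos {Ω A : Type} [Fintype Ω] {μ : Ω → ℝ} (hμ : ∀ ω, 0 ≤ μ ω) (X : Ω → A)
    (ω : Ω) (h : μ ω ≠ 0) : 0 < pr μ (fun ω' => X ω' = X ω) :=
  lt_of_lt_of_le (lt_of_le_of_ne (hμ ω) (Ne.symm h))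
    (le_pr hμ (fun ω' => X ω' = X ω) ω rfl)

lemma pr_true_eq {Ω : Type} [Fintype Ω] {μ : Ω → ℝ} (hμ : IsProb μ) (E : Ω → Prop)
    (h : ∀ ω, E ω) : pr μ E = 1 := by
  unfold pr
  simp [h, hμ.2]

lemma ent_congr {Ω A B : Type} [Fintype Ω] {μ : Ω → ℝ} (X : Ω → A) (Y : Ω → B)
    (h : ∀ ω ω', μ ω ≠ 0 → μ ω' ≠ 0 → (X ω = X ω' ↔ Y ω = Y ω')) : ent μ X = ent μ Y := by
  rw [ent_eq, ent_eq]
  congr 1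
  refine Finset.sum_congr rfl fun ω _ => ?_
  by_cases h0 : μ ω = 0
  · simp [h0]
  · rw [pr_congr (fun ω' => X ω' = X ω) (fun ω' => Y ω' = Y ω)
      (fun ω' h' => h ω' ω h' h0)]

lemma ent_const {Ω A : Type} [Fintype Ω] {μ : Ω → ℝ} (hμ : IsProb μ) (X : Ω → A)
    (h : ∀ ω ω', X ω = X ω') : ent μ X = 0 := by
  rw [ent_eq]
  have : ∀ ω, pr μ (fun ω' => X ω' = X ω) = 1 := fun ω => pr_true_eq hμ _ (fun ω' => h ω' ω)
  simp [this]

/-- Monotonicity of entropy. -/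
lemma ent_mono {Ω A B : Type} [Fintype Ω] {μ : Ω → ℝ} (hμ : IsProb μ) (X : Ω → A) (Y : Ω → B)
    (h : ∀ ω ω', X ω = X ω' → Y ω = Y ω') : ent μ Y ≤ ent μ X := by
  rw [ent_eq, ent_eq]
  refine neg_le_neg (Finset.sum_le_sum fun ω _ => ?_)
  by_cases h0 : μ ω = 0
  · simp [h0]
  · refine mul_le_mul_of_nonneg_left ?_ (hμ.1 ω)
    exact Real.logb_le_logb_of_le (by norm_num) (pr_self_pos hμ.1 X ω h0)
      (pr_mono hμ.1 _ _ fun x => h x ω)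

/-- The Gibbs inequality, in conditional form. -/
lemma gibbs {Ω A B : Type} [Fintype Ω] {μ : Ω → ℝ} (hμ : IsProb μ) (X : Ω → A) (Y : Ω → B)
    (q : A → B → ℝ) (hq0 : ∀ a b, 0 ≤ q a b)
    (hq : ∀ b, ∑ a ∈ Finset.univ.image X, q a b ≤ 1)
    (hpos : ∀ ω, μ ω ≠ 0 → 0 < q (X ω) (Y ω)) :
    condEnt μ X Y ≤ -∑ ω, μ ω * Real.logb 2 (q (X ω) (Y ω)) := by
  set P : A × B → ℝ := fun d => pr μ (fun ω => (X ω, Y ω) = d) with hP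
  set PY : B → ℝ := fun b => pr μ (fun ω => Y ω = b) with hPY
  have hP0 : ∀ d, 0 ≤ P d := fun d => pr_nonneg hμ.1 _
  have hPY0 : ∀ d, 0 ≤ PY d := fun d => pr_nonneg hμ.1 _
  have h1 : ∑ ω, μ ω * (q (X ω) (Y ω) * PY (Y ω) / P (X ω, Y ω)) ≤ 1 := by
    rw [sum_fiber μ (fun ω => (X ω, Y ω)) (Finset.univ.image X ×ˢ Finset.univ.image Y)
      (by simp) (fun d => q d.1 d.2 * PY d.2 / P d)]
    have hY : ∑ b ∈ Finset.univ.image Y, PY b = 1 := by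
      have := sum_fiber μ Y (Finset.univ.image Y) (by simp) (fun _ => 1)
      simp only [mul_one] at this
      rw [← hμ.2, this]
    calc ∑ d ∈ Finset.univ.image X ×ˢ Finset.univ.image Y, P d * (q d.1 d.2 * PY d.2 / P d)
        ≤ ∑ d ∈ Finset.univ.image X ×ˢ Finset.univ.image Y, q d.1 d.2 * PY d.2 := by
          refine Finset.sum_le_sum fun d _ => ?_
          by_cases h0 : P d = 0
          · rw [h0, zero_mul]
            exact mul_nonneg (hq0 _ _) (hPY0 _)
          · rw [mul_div_cancel₀ _ h0]
      _ = ∑ b ∈ Finset.univ.image Y, (∑ a ∈ Finset.univ.image X, q a b) * PY b := by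
          rw [Finset.sum_product_right]
          simp_rw [Finset.sum_mul]
      _ ≤ ∑ b ∈ Finset.univ.image Y, 1 * PY b :=
          Finset.sum_le_sum fun b _ => mul_le_mul_of_nonneg_right (hq b) (hPY0 b)
      _ = 1 := by simp [hY]
  have hl2 : 0 < Real.log 2 := Real.log_pos (by norm_num)
  have h2 : ∑ ω, μ ω * (Real.logb 2 (q (X ω) (Y ω)) + Real.logb 2 (PY (Y ω))
      - Real.logb 2 (P (X ω, Y ω))) ≤
      ∑ ω, (μ ω * (q (X ω) (Y ω) * PY (Y ω) / P (X ω, Y ω)) - μ ω) / Real.log 2 := by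
    refine Finset.sum_le_sum fun ω _ => ?_
    by_cases h0 : μ ω = 0
    · simp [h0]
    have hPp : 0 < P (X ω, Y ω) := pr_self_pos hμ.1 (fun ω => (X ω, Y ω)) ω h0
    have hYp : 0 < PY (Y ω) := pr_self_pos hμ.1 Y ω h0
    have hqp := hpos ω h0
    rw [← Real.logb_mul hqp.ne' hYp.ne', ← Real.logb_div (mul_pos hqp hYp).ne' hPp.ne']
    have := Real.log_le_sub_one_of_pos (div_pos (mul_pos hqp hYp) hPp)
    rw [Real.logb, ← mul_div_assoc]
    refine div_le_div_of_nonneg_right ?_ hl2.le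
    nlinarith [hμ.1 ω]
  rw [← Finset.sum_div, Finset.sum_sub_distrib, hμ.2] at h2
  have h3 : (∑ ω, μ ω * (q (X ω) (Y ω) * PY (Y ω) / P (X ω, Y ω)) - 1) / Real.log 2 ≤ 0 :=
    div_nonpos_of_nonpos_of_nonneg (by linarith) hl2.le
  have h4 := h2.trans h3
  simp only [mul_sub, mul_add, Finset.sum_sub_distrib, Finset.sum_add_distrib] at h4
  unfold condEnt
  rw [ent_eq, ent_eq]
  linarith

/-- Submodularity: conditioning reduces entropy. -/
lemma condEnt_le {Ω A B C : Type} [Fintype Ω] {μ : Ω → ℝ} (hμ : IsProb μ) (X : Ω → A)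
    (Y : Ω → B) (Z : Ω → C) (h : ∀ ω ω', Y ω = Y ω' → Z ω = Z ω') :
    condEnt μ X Y ≤ condEnt μ X Z := by
  have h1 : condEnt μ X Y = condEnt μ X (fun ω => (Y ω, Z ω)) := by
    unfold condEnt
    rw [ent_congr (fun ω => (X ω, Y ω)) (fun ω => (X ω, Y ω, Z ω)),
      ent_congr Y (fun ω => (Y ω, Z ω))]
    · intro ω ω' _ _
      have := h ω ω'
      simp only [Prod.mk.injEq]
      tauto
    · intro ω ω' _ _
      have := h ω ω'
      simp only [Prod.mk.injEq]
      tauto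
  rw [h1]
  refine (gibbs hμ X (fun ω => (Y ω, Z ω))
    (fun a d => pr μ (fun ω => (X ω, Z ω) = (a, d.2)) / pr μ (fun ω => Z ω = d.2))
    (fun a b => div_nonneg (pr_nonneg hμ.1 _) (pr_nonneg hμ.1 _)) ?_ ?_).trans (le_of_eq ?_)
  · rintro ⟨b, c⟩
    rw [← Finset.sum_div]
    refine div_le_one_of_le₀ (le_of_eq ?_) (pr_nonneg hμ.1 _)
    have := sum_fiber (fun ω => if Z ω = c then μ ω else 0) X (Finset.univ.image X) (by simp)
      (fun _ => 1)
    simp only [mul_one] at this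
    unfold pr at this ⊢
    rw [this]
    refine Finset.sum_congr rfl fun a _ => Finset.sum_congr rfl fun ω _ => ?_
    by_cases h1 : X ω = a <;> by_cases h2 : Z ω = c <;> simp [h1, h2]
  · intro ω h0
    exact div_pos (pr_self_pos hμ.1 (fun ω => (X ω, Z ω)) ω h0) (pr_self_pos hμ.1 Z ω h0)
  · unfold condEnt
    rw [ent_eq, ent_eq, ← sub_eq_zero]
    have : ∀ ω, μ ω * Real.logb 2 (pr μ (fun ω_1 => (X ω_1, Z ω_1) = (X ω, Z ω)) /
        pr μ (fun ω_1 => Z ω_1 = Z ω)) =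
        μ ω * Real.logb 2 (pr μ (fun ω_1 => (X ω_1, Z ω_1) = (X ω, Z ω))) -
        μ ω * Real.logb 2 (pr μ (fun ω_1 => Z ω_1 = Z ω)) := by
      intro ω
      by_cases h0 : μ ω = 0
      · simp [h0]
      rw [Real.logb_div (pr_self_pos hμ.1 (fun ω => (X ω, Z ω)) ω h0).ne'
        (pr_self_pos hμ.1 Z ω h0).ne']
      ring
    simp only [this, Finset.sum_sub_distrib]
    ring

/-- `H(G | Z) ≤ H(G | X) + H(G | Y) + I(X : Y | Z)`. -/
lemma key_ineq {Ω A B C D : Type} [Fintype Ω] {μ : Ω → ℝ} (hμ : IsProb μ) (X : Ω → A)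
    (Y : Ω → B) (Z : Ω → C) (G : Ω → D) :
    condEnt μ G Z ≤ condEnt μ G X + condEnt μ G Y + condMutualInfo μ X Y Z := by
  have h1 := condEnt_le hμ G (fun ω => (X ω, Z ω)) X (by simp +contextual)
  have h2 := condEnt_le hμ G (fun ω => (Y ω, Z ω)) Y (by simp +contextual)
  have h3 := condEnt_le hμ X (fun ω => (Y ω, G ω, Z ω)) (fun ω => (G ω, Z ω))
    (by simp +contextual)
  have h4 := ent_mono hμ (fun ω => (X ω, Y ω, G ω, Z ω)) (fun ω => ((X ω, Y ω), Z ω))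
    (by simp +contextual)
  have h5 : ent μ (fun ω => (X ω, G ω, Z ω)) = ent μ (fun ω => (G ω, X ω, Z ω)) :=
    ent_congr _ _ (by intros; simp only [Prod.mk.injEq]; tauto)
  have h6 : ent μ (fun ω => (Y ω, G ω, Z ω)) = ent μ (fun ω => (G ω, Y ω, Z ω)) :=
    ent_congr _ _ (by intros; simp only [Prod.mk.injEq]; tauto)
  unfold condMutualInfo
  unfold condEnt at *
  linarith

lemma mutualInfo_of_indep {Ω A B : Type} [Fintype Ω] {μ : Ω → ℝ} (hμ : IsProb μ) (X : Ω → A)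
    (Y : Ω → B) (h : Indep μ X Y) : condMutualInfo μ X Y (fun _ => ()) = 0 := by
  have e0 : ent μ (fun _ : Ω => ()) = 0 := ent_const hμ _ (fun _ _ => rfl)
  have e1 : ent μ (fun ω => (X ω, ())) = ent μ X := ent_congr _ _ (by intros; simp)
  have e2 : ent μ (fun ω => (Y ω, ())) = ent μ Y := ent_congr _ _ (by intros; simp)
  have e3 : ent μ (fun ω => ((X ω, Y ω), ())) = ent μ (fun ω => (X ω, Y ω)) :=
    ent_congr _ _ (by intros; simp)
  unfold condMutualInfo condEnt
  rw [e0, e1, e2, e3, ent_eq, ent_eq, ent_eq]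
  have : ∀ ω, μ ω * Real.logb 2 (pr μ (fun ω' => (X ω', Y ω') = (X ω, Y ω))) =
      μ ω * Real.logb 2 (pr μ (fun ω' => X ω' = X ω)) +
      μ ω * Real.logb 2 (pr μ (fun ω' => Y ω' = Y ω)) := by
    intro ω
    by_cases h0 : μ ω = 0
    · simp [h0]
    have := h (X ω) (Y ω)
    simp only [Prod.mk.injEq]
    rw [this, Real.logb_mul (pr_self_pos hμ.1 X ω h0).ne' (pr_self_pos hμ.1 Y ω h0).ne']
    ring
  simp only [this, Finset.sum_add_distrib]
  ring

lemma ent_pull {Ω Ω' A : Type} [Fintype Ω] [Fintype Ω'] {μ : Ω → ℝ} {ν : Ω' → ℝ} (p : Ω' → Ω)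
    (hp : ∀ E : Ω → Prop, pr ν (fun x => E (p x)) = pr μ E) (X : Ω → A) :
    ent ν (fun x => X (p x)) = ent μ X := by
  rw [ent_eq, sum_fiber ν (fun x => X (p x)) (Finset.univ.image X) (by simp)
    (fun a => Real.logb 2 (pr ν (fun x => X (p x) = a)))]
  unfold ent
  congr 1
  refine Finset.sum_congr rfl fun a _ => ?_
  rw [hp (fun ω => X ω = a)]

lemma order_pull {Ω Ω' A B : Type} [iΩ : Fintype Ω] [iΩ' : Fintype Ω'] {μ : Ω → ℝ} {ν : Ω' → ℝ}
    (p : Ω' → Ω) (hp : ∀ E : Ω → Prop, pr ν (fun x => E (p x)) = pr μ E)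
    (X : Ω → A) (Y : Ω → B) (k : ℕ) (h : CondIndepOrderAux k Ω A B iΩ μ X Y) :
    CondIndepOrderAux k Ω' A B iΩ' ν (fun x => X (p x)) (fun x => Y (p x)) := by
  cases k with
  | zero =>
    intro a b
    have := h a b
    rw [← hp, ← hp, ← hp] at this
    exact this
  | succ k =>
    obtain ⟨Ω₁, A', B', i₁, μ', α₀, β₀, αs, βs, h1, h2, h3, h4, h5⟩ := h
    refine ⟨Ω₁, A', B', i₁, μ', α₀, β₀, αs, βs, h1, ?_, h3, h4, h5⟩
    intro a b
    rw [h2, ← hp]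

/-- The fibre-product coupling of two spaces over a common pair of random variables. -/
lemma exists_coupling {Ω Ω' A : Type} [Fintype Ω] [Fintype Ω'] {μ : Ω → ℝ} {μ' : Ω' → ℝ}
    (hμ : IsProb μ) (hμ' : IsProb μ') (X : Ω → A) (X' : Ω' → A)
    (h : ∀ a, pr μ' (fun ω => X' ω = a) = pr μ (fun ω => X ω = a)) :
    ∃ ν : Ω' × Ω → ℝ, IsProb ν ∧
      (∀ E : Ω' → Prop, pr ν (fun x => E x.1) = pr μ' E) ∧
      (∀ E : Ω → Prop, pr ν (fun x => E x.2) = pr μ E) ∧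
      (∀ x, ν x ≠ 0 → X' x.1 = X x.2) := by
  set P : A → ℝ := fun a => pr μ (fun ω => X ω = a) with hP
  have hP0 : ∀ a, 0 ≤ P a := fun a => pr_nonneg hμ.1 _
  set ν : Ω' × Ω → ℝ := fun x => if X' x.1 = X x.2 then μ' x.1 * μ x.2 / P (X x.2) else 0
    with hν
  have m1 : ∀ ω', ∑ ω, ν (ω', ω) = μ' ω' := by
    intro ω'
    have e : ∀ ω, ν (ω', ω) = (μ' ω' / P (X' ω')) * (if X ω = X' ω' then μ ω else 0) := by
      intro ω
      by_cases hx : X ω = X' ω'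
      · simp only [hν, hx, if_true]
        ring
      · have : ¬ (X' ω' = X ω) := fun h => hx h.symm
        simp [hν, this, hx]
    simp_rw [e]
    rw [← Finset.mul_sum]
    change _ * P (X' ω') = _
    by_cases h0 : P (X' ω') = 0
    · rw [h0, mul_zero]
      have := le_pr hμ'.1 (fun ω => X' ω = X' ω') ω' rfl
      rw [h] at this
      exact le_antisymm (hμ'.1 ω') (this.trans h0.le)
    · field_simp
  have m2 : ∀ ω, ∑ ω', ν (ω', ω) = μ ω := by
    intro ω
    have e : ∀ ω', ν (ω', ω) = (μ ω / P (X ω)) * (if X' ω' = X ω then μ' ω' else 0) := by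
      intro ω'
      by_cases hx : X' ω' = X ω
      · simp only [hν, hx, if_true]
        ring
      · simp [hν, hx]
    simp_rw [e]
    rw [← Finset.mul_sum]
    have h' := h (X ω)
    change _ = P (X ω) at h'
    change _ * pr μ' (fun ω' => X' ω' = X ω) = _
    rw [h']
    by_cases h0 : P (X ω) = 0
    · rw [h0, mul_zero]
      have := le_pr hμ.1 (fun ω' => X ω' = X ω) ω rfl
      exact le_antisymm (hμ.1 ω) (this.trans h0.le)
    · field_simp
  refine ⟨ν, ⟨?_, ?_⟩, ?_, ?_, ?_⟩
  · intro x
    simp only [hν]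
    split_ifs
    · exact div_nonneg (mul_nonneg (hμ'.1 _) (hμ.1 _)) (hP0 _)
    · exact le_rfl
  · rw [Fintype.sum_prod_type]
    simp_rw [m1]
    exact hμ'.2
  · intro E
    unfold pr
    rw [Fintype.sum_prod_type]
    refine Finset.sum_congr rfl fun ω' _ => ?_
    by_cases hE : E ω'
    · simp [hE, m1]
    · simp [hE]
  · intro E
    unfold pr
    rw [Fintype.sum_prod_type_right]
    refine Finset.sum_congr rfl fun ω _ => ?_
    by_cases hE : E ω
    · simp [hE, m2]
    · simp [hE]
  · intro x hx
    by_contra hne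
    exact hx (by simp [hν, hne])

/-- `H(γ) ≤ 2^k (H(γ|α) + H(γ|β))` for conditionally independent `α, β` of order `k`. -/
lemma order_ineq (k : ℕ) : ∀ {Ω A B C : Type} [iΩ : Fintype Ω] {μ : Ω → ℝ} (_ : IsProb μ)
    (X : Ω → A) (Y : Ω → B) (G : Ω → C) (_ : CondIndepOrderAux k Ω A B iΩ μ X Y),
    ent μ G ≤ 2 ^ k * (condEnt μ G X + condEnt μ G Y) := by
  induction k with
  | zero =>
    intro Ω A B C iΩ μ hμ X Y G h
    have h1 := key_ineq hμ X Y (fun _ => ()) G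
    rw [mutualInfo_of_indep hμ X Y h] at h1
    have e0 : ent μ (fun _ : Ω => ()) = 0 := ent_const hμ _ (fun _ _ => rfl)
    have e1 : ent μ (fun ω => (G ω, ())) = ent μ G := ent_congr _ _ (by intros; simp)
    have e2 : condEnt μ G (fun _ => ()) = ent μ G := by
      unfold condEnt
      rw [e0, e1, sub_zero]
    rw [e2] at h1
    simpa using h1
  | succ k ih =>
    intro Ω A B C iΩ μ hμ X Y G h
    obtain ⟨Ω', A', B', i', μ', α₀, β₀, αs, βs, h1, h2, h3, h4, h5⟩ := h
    obtain ⟨ν, hν, f1, f2, hae⟩ := exists_coupling hμ h1 (fun ω => (X ω, Y ω))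
      (fun ω => (α₀ ω, β₀ ω)) (by
        rintro ⟨a, b⟩
        simpa only [Prod.mk.injEq] using h2 a b)
    have hX : ∀ x, ν x ≠ 0 → α₀ x.1 = X x.2 := fun x hx => (Prod.mk.inj (hae x hx)).1
    have hY : ∀ x, ν x ≠ 0 → β₀ x.1 = Y x.2 := fun x hx => (Prod.mk.inj (hae x hx)).2
    have h6 := ih hν (fun x => αs x.1) (fun x => βs x.1) (fun x => G x.2)
      (order_pull Prod.fst f1 αs βs k h5)
    have tr : ∀ {D : Type} (Z : Ω' → D), condMutualInfo μ' α₀ β₀ Z = 0 →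
        condMutualInfo ν (fun x => X x.2) (fun x => Y x.2) (fun x => Z x.1) = 0 := by
      intro D Z hZ
      rw [← hZ]
      unfold condMutualInfo condEnt
      rw [← ent_pull Prod.fst f1 (fun ω => (α₀ ω, Z ω)),
        ← ent_pull Prod.fst f1 (fun ω => (β₀ ω, Z ω)),
        ← ent_pull Prod.fst f1 (fun ω => ((α₀ ω, β₀ ω), Z ω)), ← ent_pull Prod.fst f1 Z,
        ent_congr (fun x : Ω' × Ω => (X x.2, Z x.1)) (fun x : Ω' × Ω => (α₀ x.1, Z x.1)),
        ent_congr (fun x : Ω' × Ω => (Y x.2, Z x.1)) (fun x : Ω' × Ω => (β₀ x.1, Z x.1)),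
        ent_congr (fun x : Ω' × Ω => ((X x.2, Y x.2), Z x.1))
          (fun x : Ω' × Ω => ((α₀ x.1, β₀ x.1), Z x.1))]
      all_goals
        intro x y hx hy
        simp only [hX x hx, hX y hy, hY x hx, hY y hy]
    have g1 := key_ineq hν (fun x => X x.2) (fun x => Y x.2) (fun x => αs x.1) (fun x => G x.2)
    have g2 := key_ineq hν (fun x => X x.2) (fun x => Y x.2) (fun x => βs x.1) (fun x => G x.2)
    rw [tr αs h3] at g1
    rw [tr βs h4] at g2
    have c1 : condEnt ν (fun x => G x.2) (fun x => X x.2) = condEnt μ G X := by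
      unfold condEnt
      rw [← ent_pull Prod.snd f2 (fun ω => (G ω, X ω)), ← ent_pull Prod.snd f2 X]
    have c2 : condEnt ν (fun x => G x.2) (fun x => Y x.2) = condEnt μ G Y := by
      unfold condEnt
      rw [← ent_pull Prod.snd f2 (fun ω => (G ω, Y ω)), ← ent_pull Prod.snd f2 Y]
    rw [c1, c2] at g1 g2
    rw [ent_pull Prod.snd f2 G] at h6
    refine h6.trans ?_
    rw [pow_succ, mul_assoc]
    exact mul_le_mul_of_nonneg_left (by linarith) (by positivity)

lemma iid_isProb {Ω : Type} [Fintype Ω] {μ : Ω → ℝ} (hμ : IsProb μ) (n : ℕ) :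
    IsProb (iidMeasure μ n) := by
  refine ⟨fun ω => Finset.prod_nonneg fun i _ => hμ.1 _, ?_⟩
  unfold iidMeasure
  rw [← Fintype.prod_sum (fun (_ : Fin n) ω => μ ω)]
  simp [hμ.2]

lemma iid_pr {Ω : Type} [Fintype Ω] (μ : Ω → ℝ) (n : ℕ) (E : Fin n → Ω → Prop) :
    pr (iidMeasure μ n) (fun ωv => ∀ i, E i (ωv i)) = ∏ i, pr μ (E i) := by
  unfold pr iidMeasure
  rw [Fintype.prod_sum (fun i ω => if E i ω then μ ω else 0)]
  refine Finset.sum_congr rfl fun ωv _ => ?_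
  by_cases h : ∀ i, E i (ωv i)
  · simp [h]
  · rw [if_neg h]
    push Not at h
    obtain ⟨i, hi⟩ := h
    exact (Finset.prod_eq_zero (Finset.mem_univ i) (if_neg hi)).symm

lemma iid_sum {Ω : Type} [Fintype Ω] {μ : Ω → ℝ} (hμ : IsProb μ) (n : ℕ) (i : Fin n)
    (L : Ω → ℝ) : ∑ ωv, iidMeasure μ n ωv * L (ωv i) = ∑ ω, μ ω * L ω := by
  have e : ∀ ωv : Fin n → Ω, iidMeasure μ n ωv * L (ωv i) =
      ∏ j, (μ (ωv j) * if j = i then L (ωv j) else 1) := by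
    intro ωv
    rw [Finset.prod_mul_distrib, Finset.prod_ite_eq' Finset.univ i (fun j => L (ωv j))]
    simp [iidMeasure]
  simp_rw [e]
  rw [← Fintype.prod_sum (fun j ω => μ ω * if j = i then L ω else 1),
    Finset.prod_eq_single i]
  · simp
  · intro j _ hj
    simp [hj, hμ.2]
  · simp

lemma iid_ent {Ω A : Type} [Fintype Ω] {μ : Ω → ℝ} (hμ : IsProb μ) (X : Ω → A) (n : ℕ) :
    ent (iidMeasure μ n) (iidRV X n) = n * ent μ X := by
  rw [ent_eq, ent_eq]
  have e : ∀ ωv, iidMeasure μ n ωv * Real.logb 2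
      (pr (iidMeasure μ n) (fun ω' => iidRV X n ω' = iidRV X n ωv)) =
      ∑ i, iidMeasure μ n ωv * Real.logb 2 (pr μ (fun ω' => X ω' = X (ωv i))) := by
    intro ωv
    by_cases h0 : iidMeasure μ n ωv = 0
    · simp [h0]
    have hne : ∀ i, μ (ωv i) ≠ 0 := fun i hi =>
      h0 (Finset.prod_eq_zero (Finset.mem_univ i) hi)
    have : pr (iidMeasure μ n) (fun ω' => iidRV X n ω' = iidRV X n ωv) =
        ∏ i, pr μ (fun ω' => X ω' = X (ωv i)) := by
      rw [← iid_pr μ n (fun i ω' => X ω' = X (ωv i))]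
      refine pr_congr _ _ fun ω' _ => ?_
      exact funext_iff
    rw [this, Real.logb_prod _ _ fun i _ => (pr_self_pos hμ.1 X (ωv i) (hne i)).ne',
      Finset.mul_sum]
  simp_rw [e]
  rw [Finset.sum_comm]
  simp_rw [iid_sum hμ n _ (fun ω => Real.logb 2 (pr μ (fun ω' => X ω' = X ω)))]
  simp

lemma iid_ent_pair {Ω A B : Type} [Fintype Ω] {μ : Ω → ℝ} (hμ : IsProb μ) (X : Ω → A)
    (Y : Ω → B) (n : ℕ) :
    ent (iidMeasure μ n) (fun ω => (iidRV X n ω, iidRV Y n ω)) =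
      n * ent μ (fun ω => (X ω, Y ω)) := by
  rw [← iid_ent hμ]
  refine ent_congr _ _ fun ω ω' _ _ => ?_
  simp only [iidRV, Prod.mk.injEq, funext_iff, forall_and]

lemma iid_cmi {Ω A B C : Type} [Fintype Ω] {μ : Ω → ℝ} (hμ : IsProb μ) (X : Ω → A)
    (Y : Ω → B) (Z : Ω → C) (n : ℕ) (h : condMutualInfo μ X Y Z = 0) :
    condMutualInfo (iidMeasure μ n) (iidRV X n) (iidRV Y n) (iidRV Z n) = 0 := by
  have e : ent (iidMeasure μ n) (fun ω => ((iidRV X n ω, iidRV Y n ω), iidRV Z n ω)) =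
      n * ent μ (fun ω => ((X ω, Y ω), Z ω)) := by
    rw [← iid_ent_pair hμ]
    refine ent_congr _ _ fun ω ω' _ _ => ?_
    simp only [iidRV, Prod.mk.injEq, funext_iff, forall_and]
  unfold condMutualInfo condEnt at *
  rw [e, iid_ent_pair hμ, iid_ent_pair hμ, iid_ent hμ]
  linear_combination (n : ℝ) * h

lemma iid_pr_pair {Ω A B : Type} [Fintype Ω] (μ : Ω → ℝ) (X : Ω → A)
    (Y : Ω → B) (n : ℕ) (a : Fin n → A) (b : Fin n → B) :
    pr (iidMeasure μ n) (fun ω => iidRV X n ω = a ∧ iidRV Y n ω = b) =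
      ∏ i, pr μ (fun ω => X ω = a i ∧ Y ω = b i) := by
  rw [← iid_pr μ n (fun i ω => X ω = a i ∧ Y ω = b i)]
  refine pr_congr _ _ fun ω _ => ?_
  simp only [iidRV, funext_iff, forall_and]

lemma iid_pr_single {Ω A : Type} [Fintype Ω] (μ : Ω → ℝ) (X : Ω → A) (n : ℕ) (a : Fin n → A) :
    pr (iidMeasure μ n) (fun ω => iidRV X n ω = a) = ∏ i, pr μ (fun ω => X ω = a i) := by
  rw [← iid_pr μ n (fun i ω => X ω = a i)]
  refine pr_congr _ _ fun ω _ => ?_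
  simp only [iidRV, funext_iff]

lemma iid_order (n k : ℕ) : ∀ {Ω A B : Type} [iΩ : Fintype Ω] {μ : Ω → ℝ}
    (X : Ω → A) (Y : Ω → B) (_ : CondIndepOrderAux k Ω A B iΩ μ X Y),
    CondIndepOrderAux k (Fin n → Ω) (Fin n → A) (Fin n → B) inferInstance
      (iidMeasure μ n) (iidRV X n) (iidRV Y n) := by
  induction k with
  | zero =>
    intro Ω A B iΩ μ X Y h a b
    rw [iid_pr_pair, iid_pr_single, iid_pr_single, ← Finset.prod_mul_distrib]
    exact Finset.prod_congr rfl fun i _ => h (a i) (b i)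
  | succ k ih =>
    intro Ω A B iΩ μ X Y h
    obtain ⟨Ω', A', B', i', μ', α₀, β₀, αs, βs, h1, h2, h3, h4, h5⟩ := h
    refine ⟨Fin n → Ω', Fin n → A', Fin n → B', inferInstance, iidMeasure μ' n, iidRV α₀ n,
      iidRV β₀ n, iidRV αs n, iidRV βs n, iid_isProb h1 n, ?_, iid_cmi h1 _ _ _ n h3,
      iid_cmi h1 _ _ _ n h4, ih αs βs h5⟩
    intro a b
    rw [iid_pr_pair, iid_pr_pair]
    exact Finset.prod_congr rfl fun i _ => h2 (a i) (b i)

/-- The Fano inequality. -/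
lemma fano {Ω A B : Type} [Fintype Ω] {μ : Ω → ℝ} (hμ : IsProb μ) (X : Ω → A) (Y : Ω → B)
    (r : B → A) (ε : ℝ) (h : pr μ (fun ω => r (Y ω) = X ω) > 1 - ε) :
    condEnt μ X Y ≤ 1 + ε * Real.logb 2 (Fintype.card Ω) := by
  have hne : Nonempty Ω := by
    by_contra hn
    rw [not_nonempty_iff] at hn
    have := hμ.2
    simp at this
  have hN1 : (1 : ℝ) ≤ Fintype.card Ω := by
    exact_mod_cast Fintype.card_pos
  set N : ℝ := ((Fintype.card Ω : ℕ) : ℝ) with hN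
  have hl : 0 ≤ Real.logb 2 N := Real.logb_nonneg (by norm_num) hN1
  have hg := gibbs hμ X Y (fun a b => if r b = a then 1 / 2 + 1 / (2 * N) else 1 / (2 * N))
    (fun a b => by split_ifs <;> positivity) ?_ ?_
  · refine hg.trans ?_
    rw [← Finset.sum_neg_distrib]
    have : ∀ ω, -(μ ω * Real.logb 2 (if r (Y ω) = X ω then 1 / 2 + 1 / (2 * N) else 1 / (2 * N)))
        ≤ μ ω * (1 + Real.logb 2 N) - (if r (Y ω) = X ω then μ ω else 0) * Real.logb 2 N := by
      intro ω
      by_cases hr : r (Y ω) = X ω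
      · simp only [hr, if_true]
        have h1 : Real.logb 2 (1 / 2) ≤ Real.logb 2 (1 / 2 + 1 / (2 * N)) :=
          Real.logb_le_logb_of_le (by norm_num) (by norm_num)
            (by linarith [show 0 ≤ 1 / (2 * N) by positivity])
        have h2 : Real.logb 2 (1 / 2) = -1 := by
          rw [one_div, Real.logb_inv, Real.logb_self_eq_one (by norm_num)]
        rw [h2] at h1
        nlinarith [hμ.1 ω]
      · simp only [hr, if_false]
        rw [one_div, Real.logb_inv, Real.logb_mul (by norm_num) (by positivity),
          Real.logb_self_eq_one (by norm_num)]
        linarith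
    refine (Finset.sum_le_sum fun ω _ => this ω).trans ?_
    rw [Finset.sum_sub_distrib, ← Finset.sum_mul, ← Finset.sum_mul, hμ.2]
    change 1 * (1 + Real.logb 2 N) - pr μ (fun ω => r (Y ω) = X ω) * Real.logb 2 N ≤ _
    nlinarith
  · intro b
    have e : ∀ a, (if r b = a then 1 / 2 + 1 / (2 * N) else 1 / (2 * N)) =
        (if r b = a then 1 / 2 else 0) + 1 / (2 * N) := by
      intro a
      split_ifs <;> simp
    simp_rw [e]
    rw [Finset.sum_add_distrib, Finset.sum_ite_eq]
    have h1 : (if r b ∈ Finset.univ.image X then (1 / 2 : ℝ) else 0) ≤ 1 / 2 := by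
      split_ifs <;> norm_num
    have h2 : ∑ _a ∈ Finset.univ.image X, 1 / (2 * N) ≤ 1 / 2 := by
      rw [Finset.sum_const, nsmul_eq_mul]
      have : ((Finset.univ.image X).card : ℝ) ≤ N := by
        rw [hN]
        exact_mod_cast Finset.card_image_le
      calc _ ≤ N * (1 / (2 * N)) := mul_le_mul_of_nonneg_right this (by positivity)
        _ = 1 / 2 := by field_simp
    linarith
  · intro ω _
    split_ifs <;> positivity

lemma condEnt_bits {Ω B : Type} [Fintype Ω] {μ : Ω → ℝ} (hμ : IsProb μ) (m : ℕ)
    (X : Ω → (Fin m → Bool)) (Y : Ω → B) : condEnt μ X Y ≤ m := by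
  have hg := gibbs hμ X Y (fun _ _ => 1 / (2 : ℝ) ^ m) (fun a b => by positivity) ?_
    (fun _ _ => by positivity)
  · refine hg.trans (le_of_eq ?_)
    rw [← Finset.sum_mul, hμ.2, one_div, Real.logb_inv, Real.logb_pow,
      Real.logb_self_eq_one (by norm_num)]
    ring
  · intro b
    rw [Finset.sum_const, nsmul_eq_mul]
    have : ∀ S : Finset (Fin m → Bool), (S.card : ℝ) ≤ 2 ^ m := by
      intro S
      have h := Finset.card_le_univ S
      rw [Fintype.card_fun, Fintype.card_bool, Fintype.card_fin] at h
      exact_mod_cast h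
    rw [mul_one_div]
    exact div_le_one_of_le₀ (this _) (by positivity)

lemma ent_bits {Ω : Type} [Fintype Ω] {μ : Ω → ℝ} (hμ : IsProb μ) (m : ℕ)
    (X : Ω → (Fin m → Bool)) : ent μ X ≤ m := by
  have h := condEnt_bits hμ m X (fun _ => ())
  have e0 : ent μ (fun _ : Ω => ()) = 0 := ent_const hμ _ (fun _ _ => rfl)
  have e1 : ent μ (fun ω => (X ω, ())) = ent μ X := ent_congr _ _ (by intros; simp)
  unfold condEnt at h
  rw [e0, e1] at h
  linarith

/-- `H(X | T) ≤ |F| + Fano`. -/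
lemma decode_bound {Ω A T : Type} [Fintype Ω] {μ : Ω → ℝ} (hμ : IsProb μ) (m : ℕ) (X : Ω → A)
    (t : Ω → T) (F : Ω → (Fin m → Bool)) (r : T × (Fin m → Bool) → A) (ε : ℝ)
    (h : pr μ (fun ω => r (t ω, F ω) = X ω) > 1 - ε) :
    ent μ (fun ω => (t ω, X ω)) - ent μ t ≤ m + 1 + ε * Real.logb 2 (Fintype.card Ω) := by
  have h1 := fano hμ X (fun ω => (t ω, F ω)) r ε h
  have h2 := condEnt_bits hμ m F t
  have h3 := ent_mono hμ (fun ω => (X ω, t ω, F ω)) (fun ω => (t ω, X ω)) (by simp +contextual)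
  have h4 : ent μ (fun ω => (F ω, t ω)) = ent μ (fun ω => (t ω, F ω)) :=
    ent_congr _ _ (by intros; simp only [Prod.mk.injEq]; tauto)
  unfold condEnt at *
  linarith

/-- If `α` and `β` are conditionally independent of order `k` and
`(u, v, w)` lies in the rate region of `(α, β)`, then
`H(α) + H(β) ≤ v + w + (2 − 2^{−k})·u`. -/
theorem rateRegion_bound_of_condIndepOrder {Ω A B : Type} [Fintype Ω]
    (μ : Ω → ℝ) (hμ : IsProb μ) (α : Ω → A) (β : Ω → B) (k : ℕ)
    (h : CondIndepOrder μ α β k) (u v w : ℝ) (hr : InRateRegion μ α β u v w) :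
    ent μ α + ent μ β ≤ v + w + (2 - (2:ℝ) ^ (-(k : ℤ))) * u := by
  obtain ⟨hu, hv, hw, hr⟩ := hr
  set c : ℝ := (2:ℝ) ^ (-(k : ℤ)) with hc
  have hc' : c * 2 ^ k = 1 := by
    rw [hc, zpow_neg, zpow_natCast]
    exact inv_mul_cancel₀ (by positivity)
  have hc0 : 0 < c := by positivity
  have hc1 : c ≤ 1 := by
    have : (1:ℝ) ≤ 2 ^ k := one_le_pow₀ (by norm_num)
    nlinarith
  have hne : Nonempty Ω := by
    by_contra hn
    rw [not_nonempty_iff] at hn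
    have := hμ.2
    simp at this
  set l : ℝ := Real.logb 2 (Fintype.card Ω) with hl
  have hl0 : 0 ≤ l := Real.logb_nonneg (by norm_num) (by exact_mod_cast Fintype.card_pos)
  have main : ∀ δ > (0:ℝ), ent μ α + ent μ β ≤
      v + w + (2 - c) * u + (6 + 2 * l) * δ := by
    intro δ hδ
    obtain ⟨n₀, hn₀⟩ := hr δ hδ δ hδ
    obtain ⟨n₁, hn₁⟩ := exists_nat_gt (1 / δ)
    set n := max n₀ n₁ with hn
    obtain ⟨t, f, g, r, s, h1, h2⟩ := hn₀ n (le_max_left _ _)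
    have hnδ : 1 ≤ n * δ := by
      have : 1 / δ < n := lt_of_lt_of_le hn₁ (by exact_mod_cast le_max_right _ _)
      rw [div_lt_iff₀ hδ] at this
      exact this.le
    have hnpos : 0 < (n : ℝ) := by
      by_contra hneg
      nlinarith
    have hp := iid_isProb hμ n
    set ν := iidMeasure μ n
    set X := iidRV α n
    set Y := iidRV β n
    have b1 := decode_bound hp _ X (fun ω => t (X ω, Y ω)) (fun ω => f (X ω, Y ω)) r δ h1
    have b2 := decode_bound hp _ Y (fun ω => t (X ω, Y ω)) (fun ω => g (X ω, Y ω)) s δ h2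
    have b3 := order_ineq k hp X Y (fun ω => t (X ω, Y ω)) (iid_order n k α β h)
    have b4 := ent_bits hp _ (fun ω => t (X ω, Y ω))
    have e1 : ent ν X = n * ent μ α := iid_ent hμ α n
    have e2 : ent ν Y = n * ent μ β := iid_ent hμ β n
    have ecard : Real.logb 2 (Fintype.card (Fin n → Ω)) = n * l := by
      rw [Fintype.card_fun, Fintype.card_fin, Nat.cast_pow, Real.logb_pow]
    rw [ecard] at b1 b2
    unfold condEnt at b3
    rw [e1, e2] at b3
    have fl : ∀ x : ℝ, 0 ≤ x → ((⌊(x + δ) * n⌋₊ : ℕ) : ℝ) ≤ (x + δ) * n := fun x hx =>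
      Nat.floor_le (by positivity)
    have b1' := b1.trans (add_le_add_left (add_le_add_left (fl v hv) _) _)
    have b2' := b2.trans (add_le_add_left (add_le_add_left (fl w hw) _) _)
    have b4' := b4.trans (fl u hu)
    set T := ent ν (fun ω => t (X ω, Y ω))
    have b5 := mul_le_mul_of_nonneg_left b3 hc0.le
    rw [← mul_assoc, hc', one_mul] at b5
    have b6 : (2 - c) * T ≤ (2 - c) * ((u + δ) * n) :=
      mul_le_mul_of_nonneg_left b4' (by linarith)
    have b7 : n * (ent μ α + ent μ β) ≤ n * (v + w + (2 - c) * u + (6 + 2 * l) * δ) := by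
      have : (2 - c) * (δ * n) ≤ 2 * (n * δ) := by nlinarith
      nlinarith
    exact le_of_mul_le_mul_left b7 hnpos
  refine le_of_forall_pos_le_add fun η hη => ?_
  have := main (η / (6 + 2 * l)) (by positivity)
  rwa [mul_div_cancel₀ _ (by positivity)] at this
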